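/- arXiv:1902.08144 — 15 statements merged into one kernel-verified Lean document; each statement's English description precedes it below -/
import Mathlib

section
/- Let A be an integrally closed residuated lattice. If A has a greatest element, or if A has a least element, then A is integral, i.e., a ≤ e for all a ∈ A. (In particular, any residuated lattice with a least element ⊥ has greatest element ⊥/⊥.) -/
/-- A residuated lattice: a lattice-ordered monoid with left and right residuals,
i.e. `b ≤ a\c ↔ a*b ≤ c ↔ a ≤ c/b`.  `ldiv a c` denotes `a\c` and `rdiv c b` denotes `c/b`. -/
class ResiduatedLattice (α : Type*) extends Lattice α, Monoid α where
  ldiv : α → α → α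
  rdiv : α → α → α
  le_ldiv_iff : ∀ a b c : α, b ≤ ldiv a c ↔ a * b ≤ c
  le_rdiv_iff : ∀ a b c : α, a ≤ rdiv c b ↔ a * b ≤ c

open ResiduatedLattice

/-- Any upper- or lower-bounded integrally closed residuated lattice is integral. -/
theorem bounded_integrally_closed_is_integral {α : Type*} [ResiduatedLattice α]
    (hic : ∀ a : α, ldiv a a = 1 ∧ rdiv a a = 1)
    (hbdd : (∃ t : α, ∀ a : α, a ≤ t) ∨ (∃ b : α, ∀ a : α, b ≤ a)) :
    ∀ a : α, a ≤ 1 := by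
  intro a
  rcases hbdd with ⟨t, ht⟩ | ⟨b, hb⟩
  · rw [← (hic t).1, le_ldiv_iff]
    exact ht _
  · rw [← (hic b).2, le_rdiv_iff, ← le_ldiv_iff]
    exact hb _
end

section
/- A finite residuated lattice is integrally closed if and only if it is integral. -/
open ResiduatedLattice

/-- A finite residuated lattice is integrally closed iff it is integral. -/
theorem finite_integrally_closed_iff_integral {α : Type*} [ResiduatedLattice α] [Finite α] :
    (∀ a : α, ldiv a a = 1 ∧ rdiv a a = 1) ↔ (∀ a : α, a ≤ 1) := by
  constructor
  · intro h a
    obtain ⟨t, ht⟩ := Finite.exists_le_maximal (p := fun _ : α => True) (a := a) trivial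
    have key : t * a ≤ t :=
      le_sup_right.trans (ht.2.le_of_ge trivial (le_sup_left : t ≤ t ⊔ t * a))
    rw [← (h t).1]
    exact (le_ldiv_iff t a t).2 key
  · intro h a
    refine ⟨le_antisymm (h _) ?_, le_antisymm (h _) ?_⟩
    · exact (le_ldiv_iff a 1 a).2 (mul_one a).le
    · exact (le_rdiv_iff 1 a a).2 (one_mul a).le
end

section
/- If a residuated lattice A satisfies a\a = e for all a ∈ A, or satisfies a/a = e for all a ∈ A, then A satisfies both a\a = e and a/a = e for all a (i.e., A is integrally closed) and moreover a\e = e/a for all a ∈ A (i.e., A is e-cyclic). -/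
open ResiduatedLattice

/-- A residuated lattice satisfying either `x\x ≈ e` or `x/x ≈ e` is integrally
closed and e-cyclic. -/
theorem integrally_closed_and_ecyclic_of_half {α : Type*} [ResiduatedLattice α]
    (h : (∀ a : α, ldiv a a = 1) ∨ (∀ a : α, rdiv a a = 1)) :
    (∀ a : α, ldiv a a = 1 ∧ rdiv a a = 1) ∧ (∀ a : α, ldiv a 1 = rdiv 1 a) := by
  have lmono : ∀ x y c : α, x ≤ y → c * x ≤ c * y := fun x y c hxy =>
    (le_ldiv_iff _ _ _).1 (hxy.trans ((le_ldiv_iff _ _ _).2 le_rfl))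
  have rmono : ∀ x y c : α, x ≤ y → x * c ≤ y * c := fun x y c hxy =>
    (le_rdiv_iff _ _ _).1 (hxy.trans ((le_rdiv_iff _ _ _).2 le_rfl))
  have key : (∀ a b : α, a * b ≤ a → b ≤ 1) ∧ (∀ a b : α, b * a ≤ a → b ≤ 1) ∧
      (∀ a b : α, a * b ≤ 1 → b * a ≤ 1) := by
    rcases h with h | h
    · have H : ∀ a b : α, a * b ≤ a → b ≤ 1 := fun a b hab => by
        rw [← h a]; exact (le_ldiv_iff a b a).2 hab
      refine ⟨H, ?_, ?_⟩
      · intro a b hb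
        have hu : rdiv a a * a ≤ a := (le_rdiv_iff _ _ _).1 le_rfl
        have h2 : rdiv a a * rdiv a a ≤ rdiv a a := by
          rw [le_rdiv_iff, mul_assoc]
          exact (lmono _ _ _ hu).trans hu
        exact ((le_rdiv_iff b a a).2 hb).trans (H _ _ h2)
      · intro a b hab
        apply H a
        rw [← mul_assoc]
        simpa using rmono _ _ a hab
    · have H : ∀ a b : α, b * a ≤ a → b ≤ 1 := fun a b hab => by
        rw [← h a]; exact (le_rdiv_iff b a a).2 hab
      refine ⟨?_, H, ?_⟩
      · intro a b hb
        have hu : a * ldiv a a ≤ a := (le_ldiv_iff _ _ _).1 le_rfl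
        have h2 : ldiv a a * ldiv a a ≤ ldiv a a := by
          rw [le_ldiv_iff, ← mul_assoc]
          exact (rmono _ _ _ hu).trans hu
        exact ((le_ldiv_iff a b a).2 hb).trans (H _ _ h2)
      · intro a b hab
        apply H b
        rw [mul_assoc]
        simpa using lmono _ _ b hab
  obtain ⟨H1, H2, H3⟩ := key
  refine ⟨fun a => ⟨le_antisymm ?_ ?_, le_antisymm ?_ ?_⟩, fun a => le_antisymm ?_ ?_⟩
  · exact H1 a _ ((le_ldiv_iff _ _ _).1 le_rfl)
  · rw [le_ldiv_iff, mul_one]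
  · exact H2 a _ ((le_rdiv_iff _ _ _).1 le_rfl)
  · rw [le_rdiv_iff, one_mul]
  · exact (le_rdiv_iff _ _ _).2 (H3 _ _ ((le_ldiv_iff _ _ _).1 le_rfl))
  · exact (le_ldiv_iff _ _ _).2 (H3 _ _ ((le_rdiv_iff _ _ _).1 le_rfl))
end

section
/- Let A be an integrally closed residuated lattice and write ~a := a\e (= e/a). Then ~(a\b) = ~b/~a and ~(b/a) = ~a\~b for all a, b ∈ A. -/
open ResiduatedLattice

/-- In any integrally closed residuated lattice, `~(a\b) = ~b/~a` and
`~(b/a) = ~a\~b`, where `~a := a\e = e/a`. -/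
theorem not_ldiv_eq_and_not_rdiv_eq {α : Type*} [ResiduatedLattice α]
    (hic : ∀ a : α, ldiv a a = 1 ∧ rdiv a a = 1) :
    ∀ a b : α, ldiv (ldiv a b) 1 = rdiv (ldiv b 1) (ldiv a 1) ∧
      ldiv (rdiv b a) 1 = ldiv (ldiv a 1) (ldiv b 1) := by
  have ml : ∀ x y z : α, x ≤ y → z * x ≤ z * y := fun x y z h =>
    (le_ldiv_iff z x (z * y)).1 (h.trans ((le_ldiv_iff z y (z * y)).2 le_rfl))
  have mr : ∀ x y z : α, x ≤ y → x * z ≤ y * z := fun x y z h =>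
    (le_rdiv_iff x z (y * z)).1 (h.trans ((le_rdiv_iff y z (y * z)).2 le_rfl))
  have icl : ∀ a x : α, a * x ≤ a → x ≤ 1 := fun a x h => by
    rw [← (hic a).1]; exact (le_ldiv_iff a x a).2 h
  have icr : ∀ a x : α, x * a ≤ a → x ≤ 1 := fun a x h => by
    rw [← (hic a).2]; exact (le_rdiv_iff x a a).2 h
  have cyc : ∀ x y : α, x * y ≤ 1 → y * x ≤ 1 := fun x y h => by
    apply icr y
    have := ml _ _ y h
    rwa [mul_one, ← mul_assoc] at this
  have nl : ∀ a : α, a * ldiv a 1 ≤ 1 := fun a => (le_ldiv_iff a _ 1).1 le_rfl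
  have toN : ∀ a x : α, x * a ≤ 1 → x ≤ ldiv a 1 := fun a x h =>
    (le_ldiv_iff a x 1).2 (cyc _ _ h)
  intro a b
  constructor
  · apply eq_of_forall_le_iff
    intro c
    rw [le_ldiv_iff, le_rdiv_iff, le_ldiv_iff]
    constructor
    · intro h
      have h1 : ldiv a 1 * b ≤ ldiv a b := by
        rw [le_ldiv_iff, ← mul_assoc]
        simpa using mr _ _ b (nl a)
      have h2 := cyc _ _ ((mr _ _ c h1).trans h |> (mul_assoc _ _ _).symm.le.trans)
      rwa [mul_assoc] at h2
    · intro h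
      have h1 : a * ldiv a b ≤ b := (le_ldiv_iff _ _ _).1 le_rfl
      have h2 := (mr _ _ (c * ldiv a 1) h1).trans h
      rw [mul_assoc] at h2
      have h3 := cyc _ _ h2
      apply icr (ldiv a 1)
      apply toN
      simpa only [mul_assoc] using h3
  · apply eq_of_forall_le_iff
    intro c
    rw [le_ldiv_iff, le_ldiv_iff, le_ldiv_iff]
    constructor
    · intro h
      have h1 : b * ldiv a 1 ≤ rdiv b a := by
        rw [le_rdiv_iff, mul_assoc]
        simpa using ml _ _ b (cyc _ _ (nl a))
      rw [← mul_assoc]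
      exact (mr _ _ c h1).trans h
    · intro h
      have h1 : rdiv b a * a ≤ b := (le_rdiv_iff _ _ _).1 le_rfl
      have h2 := (mr _ _ (ldiv a 1 * c) h1).trans h
      rw [mul_assoc] at h2
      have h3 := cyc _ _ h2
      apply cyc
      apply icl (ldiv a 1)
      rw [le_ldiv_iff]
      simpa only [mul_assoc] using h3
end

section
/- Let A be an e-cyclic residuated lattice, with ~a := a\e (= e/a). If A satisfies ~(a\b) = ~b/~a for all a, b ∈ A, then A is integrally closed, i.e., a\a = e and a/a = e for all a ∈ A. -/
open ResiduatedLattice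

/-- An e-cyclic residuated lattice satisfying `~(x\y) ≈ ~y/~x` is integrally closed. -/
theorem integrally_closed_of_not_ldiv_eq {α : Type*} [ResiduatedLattice α]
    (hcyc : ∀ a : α, ldiv a 1 = rdiv 1 a)
    (h : ∀ a b : α, ldiv (ldiv a b) 1 = rdiv (ldiv b 1) (ldiv a 1)) :
    ∀ a : α, ldiv a a = 1 ∧ rdiv a a = 1 := by
  have key : ∀ a : α, ldiv a a = 1 := by
    intro a
    apply le_antisymm
    · have h1 : (1 : α) ≤ ldiv (ldiv a a) 1 := by
        rw [h, le_rdiv_iff, one_mul]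
      rwa [le_ldiv_iff, mul_one] at h1
    · rw [le_ldiv_iff, mul_one]
  intro a
  refine ⟨key a, le_antisymm ?_ ?_⟩
  · have hv : rdiv a a * a ≤ a := (le_rdiv_iff _ _ _).1 le_rfl
    have hvv : rdiv a a * rdiv a a ≤ rdiv a a := by
      rw [le_rdiv_iff, mul_assoc, ← le_ldiv_iff]
      exact hv.trans ((le_ldiv_iff _ _ _).2 hv)
    rw [← le_ldiv_iff, key] at hvv
    exact hvv
  · rw [le_rdiv_iff, one_mul]
end

section
/- Let A be an integrally closed residuated lattice and write ~a := a\e (= e/a). Then for all a, b ∈ A: if a·(~a)·b ≤ e, then b ≤ e; and likewise if b·(~a)·a ≤ e, then b ≤ e. -/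
open ResiduatedLattice

/-- In any integrally closed residuated lattice: `a·(~a)·b ≤ e` implies `b ≤ e`,
and `b·(~a)·a ≤ e` implies `b ≤ e`, where `~a := a\e = e/a`. -/
theorem quasi_weakening_of_integrally_closed {α : Type*} [ResiduatedLattice α]
    (hic : ∀ a : α, ldiv a a = 1 ∧ rdiv a a = 1) :
    ∀ a b : α, (a * ldiv a 1 * b ≤ 1 → b ≤ 1) ∧ (b * ldiv a 1 * a ≤ 1 → b ≤ 1) := by
  have hl : ∀ x y : α, x * y ≤ x → y ≤ 1 := fun x y h => by
    rw [← (hic x).1]; exact (le_ldiv_iff x y x).2 h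
  have hr : ∀ x y : α, y * x ≤ x → y ≤ 1 := fun x y h => by
    rw [← (hic x).2]; exact (le_rdiv_iff y x x).2 h
  have hmono : ∀ x y z : α, x ≤ y → z * x ≤ z * y := fun x y z h =>
    (le_ldiv_iff z x (z * y)).1 (h.trans ((le_ldiv_iff z y (z * y)).2 le_rfl))
  have hcyc : ∀ a c : α, c * a ≤ 1 → a * c ≤ 1 := fun a c h => by
    apply hr a
    have := hmono _ _ a h
    rwa [mul_one, ← mul_assoc] at this
  intro a b
  constructor
  · intro h
    rw [mul_assoc] at h
    exact hl _ _ ((le_ldiv_iff a _ 1).2 h)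
  · intro h
    exact hr _ _ ((le_ldiv_iff a _ 1).2 (hcyc _ _ h))
end

section
/- Let A be an e-cyclic residuated lattice, with ~a := a\e (= e/a). If A satisfies the quasiequation (for all a, b ∈ A: a·(~a)·b ≤ e implies b ≤ e), then A is integrally closed, i.e., a\a = e and a/a = e for all a ∈ A. -/
open ResiduatedLattice

/-- An e-cyclic residuated lattice satisfying the quasiequation
`x·(~x)·y ≤ e ⟹ y ≤ e` is integrally closed. -/
theorem integrally_closed_of_quasi_weakening {α : Type*} [ResiduatedLattice α]
    (hcyc : ∀ a : α, ldiv a 1 = rdiv 1 a)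
    (h : ∀ a b : α, a * ldiv a 1 * b ≤ 1 → b ≤ 1) :
    ∀ a : α, ldiv a a = 1 ∧ rdiv a a = 1 := by
  have cyc : ∀ x y : α, x * y ≤ 1 → y * x ≤ 1 := by
    intro x y hxy
    rw [← le_ldiv_iff, hcyc, le_rdiv_iff] at hxy
    exact hxy
  have key : ∀ a r : α, r * a ≤ a → r ≤ 1 := by
    intro a r hr
    have h1 : a * ldiv a 1 ≤ 1 := (le_ldiv_iff _ _ _).1 le_rfl
    have h2 : a ≤ rdiv 1 (ldiv a 1) := (le_rdiv_iff _ _ _).2 h1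
    have h3 : r * a * ldiv a 1 ≤ 1 := (le_rdiv_iff _ _ _).1 (hr.trans h2)
    rw [mul_assoc] at h3
    exact h a r (cyc _ _ h3)
  intro a
  constructor
  · apply le_antisymm
    · have hb : a * ldiv a a ≤ a := (le_ldiv_iff _ _ _).1 le_rfl
      have h1 : ldiv a 1 * a ≤ 1 := cyc _ _ ((le_ldiv_iff _ _ _).1 le_rfl)
      have h2 : a ≤ ldiv (ldiv a 1) 1 := (le_ldiv_iff _ _ _).2 h1
      have h3 : ldiv a 1 * (a * ldiv a a) ≤ 1 := (le_ldiv_iff _ _ _).1 (hb.trans h2)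
      rw [← mul_assoc] at h3
      have h4 := cyc _ _ h3
      rw [← mul_assoc] at h4
      exact key (ldiv a 1) _ ((le_ldiv_iff _ _ _).2 (cyc _ _ h4))
    · rw [le_ldiv_iff, mul_one]
  · apply le_antisymm
    · exact key a _ ((le_rdiv_iff _ _ _).1 le_rfl)
    · rw [le_rdiv_iff, one_mul]
end

section
/- Let A be an integrally closed residuated lattice and write ~a := a\e (= e/a). Then the map α(a) = ~~a preserves binary meets: ~~(a ∧ b) = ~~a ∧ ~~b for all a, b ∈ A. -/
open ResiduatedLattice

theorem rl_mul_left {α : Type*} [ResiduatedLattice α] {a b : α} (c : α) (h : a ≤ b) :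
    c * a ≤ c * b :=
  (le_ldiv_iff _ _ _).1 (h.trans ((le_ldiv_iff _ _ _).2 le_rfl))

theorem rl_mul_right {α : Type*} [ResiduatedLattice α] {a b : α} (c : α) (h : a ≤ b) :
    a * c ≤ b * c :=
  (le_rdiv_iff _ _ _).1 (h.trans ((le_rdiv_iff _ _ _).2 le_rfl))

theorem rl_anti {α : Type*} [ResiduatedLattice α] {a b : α} (h : a ≤ b) :
    ldiv b (1 : α) ≤ ldiv a 1 :=
  (le_ldiv_iff _ _ _).2 ((rl_mul_right _ h).trans ((le_ldiv_iff _ _ _).1 le_rfl))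

theorem rl_mul_neg {α : Type*} [ResiduatedLattice α] (a : α) : a * ldiv a 1 ≤ 1 :=
  (le_ldiv_iff _ _ _).1 le_rfl

theorem rl_cancel {α : Type*} [ResiduatedLattice α]
    (hic : ∀ a : α, ldiv a a = 1 ∧ rdiv a a = 1) {a z : α}
    (h : a * ldiv a 1 * z ≤ 1) : z ≤ 1 := by
  rw [mul_assoc, ← le_ldiv_iff, ← le_ldiv_iff, (hic _).1] at h
  exact h

/-- In any integrally closed residuated lattice, the nucleus `α(a) = ~~a`
preserves binary meets, where `~a := a\e = e/a`. -/
theorem notnot_inf {α : Type*} [ResiduatedLattice α]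
    (hic : ∀ a : α, ldiv a a = 1 ∧ rdiv a a = 1) :
    ∀ a b : α, ldiv (ldiv (a ⊓ b) 1) 1 = ldiv (ldiv a 1) 1 ⊓ ldiv (ldiv b 1) 1 := by
  intro a b
  apply le_antisymm
  · exact le_inf (rl_anti (rl_anti inf_le_left)) (rl_anti (rl_anti inf_le_right))
  · set c := ldiv (ldiv a 1) 1 ⊓ ldiv (ldiv b 1) 1 with hc
    set y := ldiv (a ⊓ b) 1 with hy
    have key : ∀ d : α, c ≤ ldiv (ldiv d 1) 1 → d * ldiv d 1 * c ≤ d := by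
      intro d hd
      have h1 : ldiv d 1 * c ≤ 1 := (le_ldiv_iff _ _ _).1 hd
      simpa [mul_assoc] using rl_mul_left d h1
    have hb : b * ldiv b 1 * c ≤ b := key b inf_le_right
    have ha : a * ldiv a 1 * c ≤ a := key a inf_le_left
    have hbc : b * ldiv b 1 * c ≤ c := by simpa using rl_mul_right c (rl_mul_neg b)
    have hx : a * ldiv a 1 * (b * ldiv b 1 * c) ≤ a ⊓ b := by
      refine le_inf ((rl_mul_left _ hbc).trans ha) ?_
      have := rl_mul_right (b * ldiv b 1 * c) (rl_mul_neg a)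
      rw [one_mul] at this
      exact this.trans hb
    have h2 : a * ldiv a 1 * (b * ldiv b 1 * (c * y)) ≤ 1 := by
      have := (rl_mul_right y hx).trans (rl_mul_neg (a ⊓ b))
      simpa only [mul_assoc] using this
    have h3 : c * y ≤ 1 := rl_cancel hic (rl_cancel hic h2)
    rw [le_ldiv_iff]
    have h4 : y * c * y ≤ y := by simpa [mul_assoc] using rl_mul_left y h3
    rw [← le_rdiv_iff, (hic y).2] at h4
    exact h4
end

section
/- Let A be an integrally closed residuated lattice and write ~a := a\e (= e/a). Then the map α(a) = ~~a preserves the residuals: ~~(a\b) = (~~a)\(~~b) and ~~(b/a) = (~~b)/(~~a) for all a, b ∈ A. -/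
open ResiduatedLattice

theorem rl_mul_le {α : Type*} [ResiduatedLattice α] {a b c d : α}
    (h : a ≤ b) (k : c ≤ d) : a * c ≤ b * d := by
  have h1 : a * c ≤ b * c := by
    rw [← le_rdiv_iff]; exact h.trans ((le_rdiv_iff _ _ _).2 le_rfl)
  have h2 : b * c ≤ b * d := by
    rw [← le_ldiv_iff]; exact k.trans ((le_ldiv_iff _ _ _).2 le_rfl)
  exact h1.trans h2

/-- In any integrally closed residuated lattice, the nucleus `α(a) = ~~a`
preserves the residuals, where `~a := a\e = e/a`. -/
theorem notnot_residuals {α : Type*} [ResiduatedLattice α]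
    (hic : ∀ a : α, ldiv a a = 1 ∧ rdiv a a = 1) :
    ∀ a b : α,
      ldiv (ldiv (ldiv a b) 1) 1 = ldiv (ldiv (ldiv a 1) 1) (ldiv (ldiv b 1) 1) ∧
      ldiv (ldiv (rdiv b a) 1) 1 = rdiv (ldiv (ldiv b 1) 1) (ldiv (ldiv a 1) 1) := by
  have cl : ∀ x y : α, x * y ≤ x → y ≤ 1 := fun x y h => by
    rw [← (hic x).1, le_ldiv_iff]; exact h
  have cr : ∀ x y : α, y * x ≤ x → y ≤ 1 := fun x y h => by
    rw [← (hic x).2, le_rdiv_iff]; exact h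
  have cyc : ∀ x y : α, x * y ≤ 1 → y * x ≤ 1 := fun x y h => by
    apply cr y
    have := rl_mul_le (le_refl y) h
    rwa [mul_one, ← mul_assoc] at this
  obtain ⟨n, hn⟩ : ∃ n : α → α, ∀ x, ldiv x 1 = n x := ⟨_, fun _ => rfl⟩
  simp only [hn]
  have N : ∀ x y : α, y ≤ n x ↔ x * y ≤ 1 := fun x y => by rw [← hn, le_ldiv_iff]
  have N' : ∀ x y : α, y ≤ n x ↔ y * x ≤ 1 := fun x y => by
    rw [N]; exact ⟨cyc _ _, cyc _ _⟩
  have xn : ∀ x : α, x * n x ≤ 1 := fun x => (N _ _).1 le_rfl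
  have nx : ∀ x : α, n x * x ≤ 1 := fun x => (N' _ _).1 le_rfl
  have dn : ∀ x : α, x ≤ n (n x) := fun x => (N _ _).2 (nx x)
  have anti : ∀ x y : α, x ≤ y → n y ≤ n x := fun x y h =>
    (N _ _).2 ((rl_mul_le h le_rfl).trans (xn y))
  have tn : ∀ x : α, n (n (n x)) = n x := fun x => le_antisymm (anti _ _ (dn x)) (dn _)
  -- dense elements
  have D : ∀ b y : α, y * (b * n b) ≤ 1 → y ≤ 1 := fun b y h => by
    have h := cyc _ _ h
    rw [mul_assoc, ← N] at h
    exact cl _ _ h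
  have D' : ∀ b y : α, (n b * b) * y ≤ 1 → y ≤ 1 := fun b y h => by
    have h := cyc _ _ h
    rw [← mul_assoc, ← N'] at h
    exact cr _ _ h
  intro a b
  constructor
  · have e1 : n (n (ldiv a b)) = n (n b * a) := by
      apply le_antisymm
      · rw [← tn (n b * a)]
        apply anti; apply anti
        rw [N, mul_assoc]
        exact (rl_mul_le le_rfl ((le_ldiv_iff _ _ _).1 le_rfl)).trans (nx b)
      · have h1 : n a * b ≤ ldiv a b := by
          rw [le_ldiv_iff, ← mul_assoc]
          simpa using rl_mul_le (xn a) (le_refl b)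
        have h2 : b * n (ldiv a b) ≤ n (n a) := by
          rw [N, ← mul_assoc]
          exact (rl_mul_le h1 le_rfl).trans (xn _)
        have h3 : n (n b * a) * n b ≤ n a := by
          rw [N', mul_assoc]; exact nx _
        rw [N]
        apply D' b
        have h4 := (rl_mul_le h3 h2).trans (xn _)
        have h5 : n (n b * a) * ((n b * b) * n (ldiv a b)) ≤ 1 := by
          simpa only [mul_assoc] using h4
        have h6 := cyc _ _ h5
        simpa only [mul_assoc] using h6
    rw [e1]
    apply eq_of_forall_le_iff
    intro x
    rw [le_ldiv_iff]
    calc x ≤ n (n b * a) ↔ x * n b ≤ n a := by rw [N', N', mul_assoc]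
      _ ↔ x * n b ≤ n (n (n a)) := by rw [tn]
      _ ↔ n (n a) * x ≤ n (n b) := by rw [N, N', mul_assoc]
  · have e1 : n (n (rdiv b a)) = n (a * n b) := by
      apply le_antisymm
      · rw [← tn (a * n b)]
        apply anti; apply anti
        rw [N', ← mul_assoc]
        exact (rl_mul_le ((le_rdiv_iff _ _ _).1 le_rfl) le_rfl).trans (xn b)
      · have h1 : b * n a ≤ rdiv b a := by
          rw [le_rdiv_iff, mul_assoc]
          simpa using rl_mul_le (le_refl b) (nx a)
        have h2 : n (rdiv b a) * b ≤ n (n a) := by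
          rw [N', mul_assoc]
          exact (rl_mul_le le_rfl h1).trans (nx _)
        have h3 : n b * n (a * n b) ≤ n a := by
          rw [N, ← mul_assoc]; exact xn _
        rw [N']
        apply D b
        have h4 := (rl_mul_le h2 h3).trans (nx _)
        have h5 : (n (rdiv b a) * (b * n b)) * n (a * n b) ≤ 1 := by
          simpa only [mul_assoc] using h4
        have h6 := cyc _ _ h5
        simpa only [mul_assoc] using h6
    rw [e1]
    apply eq_of_forall_le_iff
    intro x
    rw [le_rdiv_iff]
    calc x ≤ n (a * n b) ↔ n b * x ≤ n a := by rw [N, N, mul_assoc]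
      _ ↔ n b * x ≤ n (n (n a)) := by rw [tn]
      _ ↔ x * n (n a) ≤ n (n b) := by rw [N', N, mul_assoc]
end

section
/- Let A be an integrally closed residuated lattice and write ~a := a\e (= e/a). Then ~~(a·(~a)) = e for all a ∈ A; that is, in the image of the nucleus α(a) = ~~a (with product a ∗ b := ~~(a·b)), every element α(a) is invertible with inverse ~a, so the image is a lattice-ordered group. -/
open ResiduatedLattice

/-- In any integrally closed residuated lattice, `~~(a·(~a)) = e` for all `a`;
in the image of the nucleus `α(a) = ~~a`, with product `a ∗ b := ~~(a·b)`,
every element `α(a)` is invertible with inverse `~a` (so the image is an ℓ-group).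
Here `~a := a\e = e/a`. -/
theorem notnot_mul_not_eq_one {α : Type*} [ResiduatedLattice α]
    (hic : ∀ a : α, ldiv a a = 1 ∧ rdiv a a = 1) :
    ∀ a : α, ldiv (ldiv (a * ldiv a 1) 1) 1 = 1 ∧
      ldiv (ldiv (ldiv (ldiv a 1) 1 * ldiv a 1) 1) 1 = 1 ∧
      ldiv (ldiv (ldiv a 1 * ldiv (ldiv a 1) 1) 1) 1 = 1 := by
  have lmul : ∀ x y z : α, x ≤ y → z * x ≤ z * y := fun x y z h =>
    (le_ldiv_iff z x (z * y)).1 (h.trans ((le_ldiv_iff z y (z * y)).2 le_rfl))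
  have cyc : ∀ x y : α, x * y ≤ 1 → y * x ≤ 1 := by
    intro x y h
    have h1 := lmul _ _ y h
    rw [mul_one, ← mul_assoc] at h1
    have h2 := (le_rdiv_iff _ _ _).2 h1
    rwa [(hic y).2] at h2
  have hn : ∀ a : α, a * ldiv a 1 ≤ 1 := fun a => (le_ldiv_iff _ _ _).1 le_rfl
  have h1 : ∀ a : α, ldiv (a * ldiv a 1) 1 = 1 := by
    intro a
    apply le_antisymm
    · have h := hn (a * ldiv a 1)
      rw [mul_assoc] at h
      have h2 := (le_ldiv_iff _ _ _).2 ((le_ldiv_iff _ _ _).2 h)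
      rwa [(hic _).1] at h2
    · rw [le_ldiv_iff, mul_one]
      exact hn a
  have h2 : ∀ b : α, ldiv (ldiv b 1 * b) 1 = 1 := by
    intro b
    apply le_antisymm
    · have h := cyc _ _ (hn (ldiv b 1 * b))
      rw [← mul_assoc] at h
      have h3 := (le_rdiv_iff _ _ _).2 ((le_ldiv_iff _ _ _).2 (cyc _ _ h))
      rwa [(hic _).2] at h3
    · rw [le_ldiv_iff, mul_one]
      exact cyc _ _ (hn b)
  intro a
  rw [h1, h2, h1]
  exact ⟨(hic 1).1, (hic 1).1, (hic 1).1⟩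
end

section
/- Let A be an integrally closed residuated lattice, with ~a := a\e (= e/a), satisfying ~~a = a for all a ∈ A. Then a·(a\e) = e for all a ∈ A; that is, A is a lattice-ordered group with group inverse a⁻¹ = ~a. -/
open ResiduatedLattice

/-- An integrally closed residuated lattice satisfying `~~x ≈ x` satisfies
`x·(x\e) ≈ e`, i.e. it is an ℓ-group with group inverse `a⁻¹ = ~a`,
where `~a := a\e = e/a`. -/
theorem lgroup_of_notnot_eq_self {α : Type*} [ResiduatedLattice α]
    (hic : ∀ a : α, ldiv a a = 1 ∧ rdiv a a = 1)
    (hinv : ∀ a : α, ldiv (ldiv a 1) 1 = a) :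
    ∀ a : α, a * ldiv a 1 = 1 := by
  intro a
  have h1 : ldiv (a * ldiv a 1) (1 : α) = 1 := by
    rw [← (hic (ldiv a 1)).1]
    apply eq_of_forall_le_iff
    intro x
    rw [(hic (ldiv a 1)).1, le_ldiv_iff, mul_assoc, ← le_ldiv_iff a, ← le_ldiv_iff,
      (hic (ldiv a 1)).1]
  have h2 := hinv (a * ldiv a 1)
  rw [h1, (hic 1).1] at h2
  exact h2.symm
end

section
/- Every integrally closed residuated lattice is torsion-free: for every n ∈ ℕ with n ≥ 1 and every element a, if aⁿ = e then a = e. -/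
open ResiduatedLattice

/-- Every integrally closed residuated lattice is torsion-free:
`xⁿ ≈ e ⟹ x ≈ e` for each `n ≥ 1`. -/
theorem integrally_closed_torsion_free {α : Type*} [ResiduatedLattice α]
    (hic : ∀ a : α, ldiv a a = 1 ∧ rdiv a a = 1) :
    ∀ (n : ℕ), 1 ≤ n → ∀ a : α, a ^ n = 1 → a = 1 := by
  intro n hn a ha
  obtain ⟨m, rfl⟩ : ∃ m, n = m + 1 := ⟨n - 1, by omega⟩
  have mono : ∀ x y b : α, x ≤ y → x * b ≤ y * b := fun x y b h =>
    (le_rdiv_iff x b (y * b)).1 (h.trans ((le_rdiv_iff y b (y * b)).2 le_rfl))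
  have key : ∀ k : ℕ, ∃ s : α, 1 ≤ s ∧ a * s ≤ s ⊔ a ^ (k + 1) := by
    intro k
    induction k with
    | zero => exact ⟨1, le_rfl, by simp⟩
    | succ k ih =>
      obtain ⟨s, h1, h2⟩ := ih
      refine ⟨s ⊔ a ^ (k + 1), h1.trans le_sup_left, ?_⟩
      rw [← le_ldiv_iff]
      apply sup_le
      · rw [le_ldiv_iff]
        exact h2.trans le_sup_left
      · rw [le_ldiv_iff, ← pow_succ']
        exact le_sup_right
  obtain ⟨s, h1, h2⟩ := key m
  rw [ha, sup_eq_left.2 h1, ← le_rdiv_iff, (hic s).2] at h2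
  have hp : ∀ k : ℕ, a ^ k ≤ 1 := by
    intro k
    induction k with
    | zero => simp
    | succ k ih =>
      have h := mono _ _ a ih
      rw [one_mul, ← pow_succ] at h
      exact h.trans h2
  have h := mono _ _ a (hp m)
  rw [one_mul, ← pow_succ, ha] at h
  exact le_antisymm h2 h
end

section
/- Let A be an integrally closed residuated lattice and define the relation a ≼ b :⟺ a\b = e on A. Then ≼ is a partial order on A (reflexive, antisymmetric, and transitive); in particular, if a\b = e and b\c = e then a\c = e. -/
open ResiduatedLattice

/-- In an integrally closed residuated lattice, the relation `a ≼ b :⟺ a\b = e`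
is a partial order: reflexive, antisymmetric, and transitive. -/
theorem preceq_partial_order {α : Type*} [ResiduatedLattice α]
    (hic : ∀ a : α, ldiv a a = 1 ∧ rdiv a a = 1) :
    (∀ a : α, ldiv a a = 1) ∧
    (∀ a b : α, ldiv a b = 1 → ldiv b a = 1 → a = b) ∧
    (∀ a b c : α, ldiv a b = 1 → ldiv b c = 1 → ldiv a c = 1) := by
  have ml : ∀ x y z : α, x ≤ y → z * x ≤ z * y := fun x y z h =>
    (le_ldiv_iff z x (z * y)).1 (h.trans ((le_ldiv_iff z y (z * y)).2 le_rfl))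
  have mr : ∀ x y z : α, x ≤ y → x * z ≤ y * z := fun x y z h =>
    (le_rdiv_iff x z (y * z)).1 (h.trans ((le_rdiv_iff y z (y * z)).2 le_rfl))
  have icr : ∀ x y : α, x * y ≤ y → x ≤ 1 := fun x y h =>
    (hic y).2 ▸ (le_rdiv_iff x y y).2 h
  have le : ∀ a b : α, ldiv a b = 1 → a ≤ b := fun a b h => by
    simpa using (le_ldiv_iff a 1 b).1 h.ge
  have comm : ∀ x y : α, x * y ≤ 1 → y * x ≤ 1 := fun x y h => by
    apply icr _ y
    simpa [mul_assoc] using ml _ _ y h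
  have step : ∀ a b n : α, ldiv a b = 1 → a * n ≤ 1 → b * n ≤ 1 := fun a b n h hn => by
    apply comm
    rw [← h, le_ldiv_iff, ← mul_assoc]
    simpa using mr _ _ b hn
  refine ⟨fun a => (hic a).1, fun a b h k => le_antisymm (le a b h) (le b a k), ?_⟩
  intro a b c h k
  apply le_antisymm
  · apply icr _ (ldiv c 1)
    rw [le_ldiv_iff]
    apply step b c _ k
    apply step a b _ h
    rw [← mul_assoc]
    exact (mr _ _ _ ((le_ldiv_iff _ _ _).1 le_rfl)).trans ((le_ldiv_iff _ _ _).1 le_rfl)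
  · rw [le_ldiv_iff, mul_one]
    exact (le a b h).trans (le b c k)
end

section
/- Let M be a semi-integral residuated pomonoid and write ~a := a\e (= e/a). Then a\(a/b) = ~b and (a\b)/b = ~a for all a, b ∈ M. -/
/-- A semi-integral residuated pomonoid (sirmonoid): a partially ordered monoid with
left and right residuals, i.e. `b ≤ a\c ↔ a*b ≤ c ↔ a ≤ c/b`, in which the monoid
unit `e` is a maximal element.  `ldiv a c` denotes `a\c` and `rdiv c b` denotes `c/b`. -/
class Sirmonoid (α : Type*) extends PartialOrder α, Monoid α where
  ldiv : α → α → α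
  rdiv : α → α → α
  le_ldiv_iff : ∀ a b c : α, b ≤ ldiv a c ↔ a * b ≤ c
  le_rdiv_iff : ∀ a b c : α, a ≤ rdiv c b ↔ a * b ≤ c
  one_maximal : ∀ a : α, 1 ≤ a → a = 1

open Sirmonoid

theorem sirmonoid_aux_ldiv_self {α : Type*} [Sirmonoid α] (a : α) : ldiv a a = 1 :=
  one_maximal _ ((le_ldiv_iff _ _ _).2 (by simp))

theorem sirmonoid_aux_rdiv_self {α : Type*} [Sirmonoid α] (a : α) : rdiv a a = 1 :=
  one_maximal _ ((le_rdiv_iff _ _ _).2 (by simp))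

theorem sirmonoid_aux_mul_right {α : Type*} [Sirmonoid α] {a b : α} (c : α) (h : a ≤ b) :
    a * c ≤ b * c :=
  (le_rdiv_iff _ _ _).1 (h.trans ((le_rdiv_iff _ _ _).2 le_rfl))

theorem sirmonoid_aux_comm {α : Type*} [Sirmonoid α] (a b : α) (h : a * b ≤ 1) :
    b * a ≤ 1 := by
  have h2 := sirmonoid_aux_mul_right a h
  rw [one_mul, mul_assoc, ← le_ldiv_iff, sirmonoid_aux_ldiv_self] at h2
  exact h2

/-- In any sirmonoid, `a\(a/b) = ~b` and `(a\b)/b = ~a`, where `~a := a\e = e/a`. -/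
theorem sirmonoid_ldiv_rdiv_eq {α : Type*} [Sirmonoid α] :
    ∀ a b : α, ldiv a (rdiv a b) = ldiv b 1 ∧ rdiv (ldiv a b) b = ldiv a 1 := by
  intro a b
  constructor
  · apply eq_of_forall_le_iff
    intro x
    rw [le_ldiv_iff, le_rdiv_iff, mul_assoc, ← le_ldiv_iff, sirmonoid_aux_ldiv_self,
      le_ldiv_iff]
    exact ⟨sirmonoid_aux_comm _ _, sirmonoid_aux_comm _ _⟩
  · apply eq_of_forall_le_iff
    intro x
    rw [le_rdiv_iff, le_ldiv_iff, ← mul_assoc, ← le_rdiv_iff, sirmonoid_aux_rdiv_self,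
      le_ldiv_iff]
end

section
/- Let M be a semi-integral residuated pomonoid and write ~a := a\e (= e/a). Then the map a ↦ ~a is both antitone and monotone with respect to ≼; consequently, for all a, b ∈ M, if a ≼ b then ~a = ~b. -/
open Sirmonoid

/-- In any sirmonoid, the map `a ↦ ~a` is both antitone and monotone w.r.t. `≼`;
consequently `a ≼ b` implies `~a = ~b`.  Here `~a := a\e = e/a`. -/
theorem sirmonoid_not_antitone_monotone {α : Type*} [Sirmonoid α] :
    (∀ a b : α, a ≤ b → ldiv b 1 ≤ ldiv a 1) ∧
    (∀ a b : α, a ≤ b → ldiv a 1 ≤ ldiv b 1) ∧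
    (∀ a b : α, a ≤ b → ldiv a 1 = ldiv b 1) := by
  have mr : ∀ a b c : α, a ≤ b → a * c ≤ b * c := fun a b c h =>
    (le_rdiv_iff a c (b * c)).1 (h.trans ((le_rdiv_iff b c (b * c)).2 le_rfl))
  have ml : ∀ a b c : α, a ≤ b → c * a ≤ c * b := fun a b c h =>
    (le_ldiv_iff c a (c * b)).1 (h.trans ((le_ldiv_iff c b (c * b)).2 le_rfl))
  have anti : ∀ a b : α, a ≤ b → ldiv b 1 ≤ ldiv a 1 := fun a b h =>
    (le_ldiv_iff a _ 1).2 ((mr a b _ h).trans ((le_ldiv_iff b _ 1).1 le_rfl))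
  have mono : ∀ a b : α, a ≤ b → ldiv a 1 ≤ ldiv b 1 := by
    intro a b h
    have h1 : a * ldiv a 1 ≤ 1 := (le_ldiv_iff a _ 1).1 le_rfl
    have h2 : ldiv a b = 1 := one_maximal _ ((le_ldiv_iff a 1 b).2 (by rwa [mul_one]))
    have h3 : rdiv b b = 1 := one_maximal _ ((le_rdiv_iff 1 b b).2 (by rw [one_mul]))
    have h4 : ldiv a 1 * b ≤ 1 := by
      rw [← h2, le_ldiv_iff, h2, ← mul_assoc]
      simpa using mr _ _ b h1
    rw [le_ldiv_iff]
    have h5 : b * ldiv a 1 ≤ rdiv b b := by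
      rw [le_rdiv_iff, mul_assoc]
      simpa using ml _ _ b h4
    rwa [h3] at h5
  exact ⟨anti, mono, fun a b h => le_antisymm (mono a b h) (anti a b h)⟩
end
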